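/- Let d ≥ 2 and δ > 1/2. Then there exists a constant C > 0 such that for all k > 0, all θ0 ∈ S^{d−1} and all f ∈ L²_δ(ℝ^d), ‖S_{k,θ0} f‖_{L²(S^{d−1})} ≤ C k^{−(d−1)/2} ‖f‖_{L²_δ}. -/

import Mathlib

/-!
The operator is a Fourier restriction in disguise: with `g y = e^{ikθ0·y} f y` one has
`Sop d k θ0 f θ = 𝓕 g ((k / 2π) θ)` (`Sop_eq_fourier`), and `g` has the same weighted norm as `f`.
So it suffices to bound the `L²` norm of `𝓕 g` over the sphere of radius `a = k / 2π`, with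
respect to surface measure, by the `L²_δ` norm of `g`, uniformly in `a` (`sphere_bound`).

The uniform bound comes from a trace argument in one Cartesian variable. Write `ξ = (t, η)` with
`t` the `j`-th coordinate and let `g_s(η)` be the partial Fourier transform of `g` in the other
variables. Then `𝓕 g (t, η) = ∫ e^{-2πist} g_s(η) ds`, so Cauchy–Schwarz with the weight
`(1 + s²)^δ`, whose inverse is integrable exactly because `δ > 1/2`, bounds `|𝓕 g (t, η)|²` by
`K_δ ∫ (1 + s²)^δ |g_s(η)|² ds`, which is independent of `t`. Integrating in `η` and using
Plancherel in the transverse variables shows that `∫_A |𝓕 g|²` is at most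
`K_δ ‖g‖²_{L²_δ}` times the largest length of a slice of `A` in the `j`-th direction
(`slice_bound`).

This is applied to the thin shell `a ≤ |ξ| ≤ b`, cut into `d` pieces according to which coordinate
of `ξ` is largest; in the direction of that coordinate the sphere is transversal and the slices
have length `O(b - a)`, with a constant depending only on `d` (`volume_slice_le`, `shell_bound`).
Since `𝓕 g` is continuous for integrable `g`, dividing by `b - a` in polar coordinates and letting
`b → a` yields the bound on the sphere.

`Sop` is defined by a Bochner integral, so for non-integrable `f` it vanishes identically and the
estimate is trivial.
-/

open MeasureTheory Filter Topology Metric Asymptotics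
open scoped FourierTransform ENNReal RealInnerProductSpace

noncomputable section

/-- Euclidean space `ℝ^d`. -/
abbrev Ed (d : ℕ) := EuclideanSpace ℝ (Fin d)

/-- The Japanese bracket weight `⟨x⟩^δ = (1+‖x‖²)^{δ/2}`. -/
def jap {d : ℕ} (δ : ℝ) (x : Ed d) : ℝ := (1 + ‖x‖ ^ 2) ^ (δ / 2)

/-- The weighted `L^p_δ` norm `‖⟨x⟩^δ f‖_{L^p}`. -/
def wNorm (d : ℕ) (p δ : ℝ) (f : Ed d → ℂ) : ℝ≥0∞ :=
  eLpNorm (fun x => (jap δ x : ℂ) * f x) (ENNReal.ofReal p) volume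

/-- The Bessel operator `Λ^α = 𝓕⁻¹ ⟨ξ⟩^α 𝓕`. -/
def lam (d : ℕ) (α : ℝ) (f : Ed d → ℂ) : Ed d → ℂ :=
  𝓕⁻ (fun ξ : Ed d => (jap α ξ : ℂ) * 𝓕 f ξ)

/-- The weighted Sobolev norm `‖f‖_{W^{α,p}_δ} = ‖⟨x⟩^δ Λ^α f‖_{L^p}`. -/
def sobNorm (d : ℕ) (α p δ : ℝ) (f : Ed d → ℂ) : ℝ≥0∞ :=
  wNorm d p δ (lam d α f)

/-- A function is real valued. -/
def IsRealValued {d : ℕ} (q : Ed d → ℂ) : Prop := ∀ x, (q x).im = 0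

/-- The plane wave `e^{i k θ·x}`. -/
def pw {d : ℕ} (k : ℝ) (θ x : Ed d) : ℂ :=
  Complex.exp (Complex.I * (k : ℂ) * ((⟪θ, x⟫ : ℝ) : ℂ))

/-- The resolvent `(-Δ - k² - iε)⁻¹` of the Laplacian (`ε > 0`), on the Fourier side
`f̂(ξ)/(-|ξ|² + k² + iε)`. -/
def resEps (d : ℕ) (k ε : ℝ) (f : Ed d → ℂ) : Ed d → ℂ :=
  𝓕⁻ (fun ξ : Ed d => 𝓕 f ξ / (((k ^ 2 - ‖ξ‖ ^ 2 : ℝ) : ℂ) + (ε : ℂ) * Complex.I))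

/-- `R` is the outgoing resolvent `R_k = (-Δ - k² - i0)⁻¹`: it is the limiting absorption
limit of the resolvents `(-Δ - k² - iε)⁻¹` as `ε ↓ 0`, in every weighted space `L²_{-δ}`,
`δ > 1`. -/
def IsOutgoingResolventAt (d : ℕ) (k : ℝ) (R : (Ed d → ℂ) → Ed d → ℂ) : Prop :=
  ∀ f : Ed d → ℂ, ∀ δ : ℝ, 1 < δ →
    Tendsto (fun ε : ℝ => wNorm d 2 (-δ) (fun x => resEps d k ε f x - R f x))
      (𝓝[>] 0) (𝓝 0)

/-- `Rk` is the family of outgoing resolvents `R_k`, `k > 0`. -/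
def IsOutgoingResolvent (d : ℕ) (Rk : ℝ → (Ed d → ℂ) → Ed d → ℂ) : Prop :=
  ∀ k : ℝ, 0 < k → IsOutgoingResolventAt d k (Rk k)

/-- The conjugated resolvent `R_{k,θ0} f = e^{-ikθ0·x} R_k (f e^{ikθ0·(·)})`. -/
def conjRes (d : ℕ) (Rk : ℝ → (Ed d → ℂ) → Ed d → ℂ) (k : ℝ) (θ0 : Ed d)
    (f : Ed d → ℂ) : Ed d → ℂ :=
  fun x => pw (-k) θ0 x * Rk k (fun y => f y * pw k θ0 y) x

/-- `us` is the outgoing scattered wave for potential `q`, incident direction `θ0`, and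
wave number `k`: it solves the Lippmann-Schwinger equation. -/
def IsScatteredWave (d : ℕ) (Rk : ℝ → (Ed d → ℂ) → Ed d → ℂ) (q : Ed d → ℂ)
    (θ0 : Ed d) (k : ℝ) (us : Ed d → ℂ) : Prop :=
  ∀ x, us x = Rk k (fun y => q y * pw k θ0 y) x + Rk k (fun y => q y * us y) x

/-- The scattering amplitude `u_∞(θ, θ0, k)` built from the potential `q` and the
scattered wave `us = u_s(·, θ0, k)`. -/
def scatAmp (d : ℕ) (q us : Ed d → ℂ) (k : ℝ) (θ θ0 : Ed d) : ℂ :=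
  ∫ y : Ed d, pw (-k) θ y * q y * (pw k θ0 y + us y)

/-- The wave number `k(ξ)` such that `ξ = k(ξ)(θ(ξ) - θ0(ξ))`. -/
def kxi {d : ℕ} (θ0 ξ : Ed d) : ℝ := ‖ξ‖ ^ 2 / (2 * |(⟪ξ, θ0⟫ : ℝ)|)

/-- The incident direction `θ0(ξ)`: `θ0` on the half space `ξ·θ0 < 0` and `-θ0` on the
half space `ξ·θ0 > 0`. -/
def dir0 {d : ℕ} (θ0 ξ : Ed d) : Ed d := if (⟪ξ, θ0⟫ : ℝ) < 0 then θ0 else -θ0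

/-- The reflected direction `θ(ξ)`, so that `ξ = k(ξ)(θ(ξ) - θ0(ξ))`. -/
def thxi {d : ℕ} (θ0 ξ : Ed d) : Ed d := (kxi θ0 ξ)⁻¹ • ξ + dir0 θ0 ξ

/-- The fixed angle Born approximation `q_{θ0}`, defined on the Fourier side by
`(q_{θ0})^(ξ) = u_∞(θ(ξ), θ0(ξ), k(ξ))`; `us θ' k` is the scattered wave with incident
direction `θ'` and wave number `k`. -/
def bornApprox (d : ℕ) (q : Ed d → ℂ) (us : Ed d → ℝ → Ed d → ℂ) (θ0 : Ed d) :
    Ed d → ℂ :=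
  𝓕⁻ (fun ξ : Ed d =>
    scatAmp d q (us (dir0 θ0 ξ) (kxi θ0 ξ)) (kxi θ0 ξ) (thxi θ0 ξ) (dir0 θ0 ξ))

/-- The iterated operator `(q R_k)^j` applied to `g`. -/
def qChain (d : ℕ) (Rk : ℝ → (Ed d → ℂ) → Ed d → ℂ) (k : ℝ) (q : Ed d → ℂ) :
    ℕ → (Ed d → ℂ) → Ed d → ℂ
  | 0, g => g
  | n + 1, g => fun x => q x * Rk k (qChain d Rk k q n g) x

/-- The operator `Q_j`, defined on the Fourier side by
`(Q_j(q))^(ξ) = ∫ e^{-ik(ξ)θ(ξ)·y} (q R_{k(ξ)})^j (q e^{ik(ξ)θ0(ξ)·(·)})(y) dy`. -/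
def Qop (d : ℕ) (Rk : ℝ → (Ed d → ℂ) → Ed d → ℂ) (θ0 : Ed d) (q : Ed d → ℂ)
    (j : ℕ) : Ed d → ℂ :=
  𝓕⁻ (fun ξ : Ed d =>
    ∫ y : Ed d, pw (-(kxi θ0 ξ)) (thxi θ0 ξ) y *
      qChain d Rk (kxi θ0 ξ) q j (fun z => q z * pw (kxi θ0 ξ) (dir0 θ0 ξ) z) y)

/-- The remainder `q_m^r`, defined on the Fourier side by
`(q_m^r)^(ξ) = ∫ e^{-ik(ξ)θ(ξ)·y} (q R_{k(ξ)})^m (q u_s(·, θ0(ξ), k(ξ)))(y) dy`. -/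
def qmRem (d : ℕ) (Rk : ℝ → (Ed d → ℂ) → Ed d → ℂ) (θ0 : Ed d) (q : Ed d → ℂ)
    (us : Ed d → ℝ → Ed d → ℂ) (m : ℕ) : Ed d → ℂ :=
  𝓕⁻ (fun ξ : Ed d =>
    ∫ y : Ed d, pw (-(kxi θ0 ξ)) (thxi θ0 ξ) y *
      qChain d Rk (kxi θ0 ξ) q m (fun z => q z * us (dir0 θ0 ξ) (kxi θ0 ξ) z) y)

/-- The iterated multilinear chain `f_{j+1} R_k f_j R_k ⋯ f_2 R_k` applied to `g`. -/
def pChain (d : ℕ) (Rk : ℝ → (Ed d → ℂ) → Ed d → ℂ) (k : ℝ) (f : ℕ → Ed d → ℂ) :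
    ℕ → (Ed d → ℂ) → Ed d → ℂ
  | 0, g => g
  | n + 1, g => fun x => f (n + 2) x * Rk k (pChain d Rk k f n g) x

/-- The multilinear operator `P_j`, defined on the Fourier side by
`(P_j(f))^(ξ) = ∫ e^{-ik(ξ)θ(ξ)·y} (f_{j+1} R_{k(ξ)} ⋯ f_2 R_{k(ξ)})(f_1 e^{ik(ξ)θ0(ξ)·(·)})(y) dy`. -/
def Pop (d : ℕ) (Rk : ℝ → (Ed d → ℂ) → Ed d → ℂ) (θ0 : Ed d) (f : ℕ → Ed d → ℂ)
    (j : ℕ) : Ed d → ℂ :=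
  𝓕⁻ (fun ξ : Ed d =>
    ∫ y : Ed d, pw (-(kxi θ0 ξ)) (thxi θ0 ξ) y *
      pChain d Rk (kxi θ0 ξ) f j (fun z => f 1 z * pw (kxi θ0 ξ) (dir0 θ0 ξ) z) y)

/-- `φ` is a smooth compactly supported cut-off, `φ = 1` on `B(0,R)` and `φ = 0`
outside `B(0,2R)`. -/
def IsCutoff (d : ℕ) (R : ℝ) (φ : Ed d → ℝ) : Prop :=
  ContDiff ℝ (⊤ : ℕ∞) φ ∧ HasCompactSupport φ ∧
    (∀ x : Ed d, ‖x‖ < R → φ x = 1) ∧ (∀ x : Ed d, 2 * R < ‖x‖ → φ x = 0)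

/-- The operator `T_m(q̃) = φ q_{θ0} - φ ∑_{j=1}^m Q_j(q̃)`. -/
def Tm (d : ℕ) (Rk : ℝ → (Ed d → ℂ) → Ed d → ℂ) (θ0 : Ed d) (φ : Ed d → ℝ)
    (q : Ed d → ℂ) (us : Ed d → ℝ → Ed d → ℂ) (m : ℕ) (qt : Ed d → ℂ) : Ed d → ℂ :=
  fun x => (φ x : ℂ) * bornApprox d q us θ0 x -
    (φ x : ℂ) * ∑ j ∈ Finset.Icc 1 m, Qop d Rk θ0 qt j x

/-- The iterative sequence: `qIter m ℓ = q_{m,ℓ+1}`, i.e. `qIter m 0 = q_{m,1} = 0` and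
`qIter m (ℓ+1) = q_{m,ℓ+2} = T_m (qIter m ℓ)`. -/
def qIter (d : ℕ) (Rk : ℝ → (Ed d → ℂ) → Ed d → ℂ) (θ0 : Ed d) (φ : Ed d → ℝ)
    (q : Ed d → ℂ) (us : Ed d → ℝ → Ed d → ℂ) (m : ℕ) : ℕ → Ed d → ℂ
  | 0 => 0
  | ℓ + 1 => Tm d Rk θ0 φ q us m (qIter d Rk θ0 φ q us m ℓ)

/-- The surface measure on the unit sphere `S^{d-1}`. -/
def sphMeasure (d : ℕ) : Measure (Metric.sphere (0 : Ed d) 1) :=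
  (volume : Measure (Ed d)).toSphere

/-- The restriction operator `S_{k,θ0} f(θ) = ∫ e^{-ik(θ-θ0)·y} f(y) dy`. -/
def Sop (d : ℕ) (k : ℝ) (θ0 : Ed d) (f : Ed d → ℂ) (θ : Ed d) : ℂ :=
  ∫ y : Ed d, pw (-k) (θ - θ0) y * f y

/-! ### Plancherel for integrable functions -/

/-- The Plancherel inequality for the integral-defined `𝓕 f` of an integrable `f`. When `f` is in
`L²`, `𝓕 f` is identified with the `L²` Fourier transform by testing against smooth compactly
supported functions; otherwise the right-hand side is infinite. -/
theorem lintegral_fourier_sq_le {V : Type*} [NormedAddCommGroup V] [InnerProductSpace ℝ V]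
    [FiniteDimensional ℝ V] [MeasurableSpace V] [BorelSpace V]
    {f : V → ℂ} (hf : Integrable f) :
    ∫⁻ ξ, ‖𝓕 f ξ‖ₑ ^ 2 ≤ ∫⁻ x, ‖f x‖ₑ ^ 2 := by
  by_cases h2 : MemLp f 2
  swap
  · have : ∫⁻ x, ‖f x‖ₑ ^ 2 = ⊤ := by
      by_contra h
      apply h2
      refine ⟨hf.1, ?_⟩
      rw [eLpNorm_lt_top_iff_lintegral_rpow_enorm_lt_top (by simp) (by simp)]
      simpa using lt_top_iff_ne_top.2 h
    rw [this]; exact le_top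
  have hcont : Continuous (𝓕 f) :=
    VectorFourier.fourierIntegral_continuous Real.continuous_fourierChar
      (L := innerₗ V) continuous_inner hf
  set F : Lp ℂ 2 (volume : Measure V) := h2.toLp f with hF
  have hae : ∀ᵐ x, 𝓕 f x = (𝓕 F : Lp ℂ 2 (volume : Measure V)) x := by
    apply ae_eq_of_integral_contDiff_smul_eq hcont.locallyIntegrable
      ((Lp.memLp _).locallyIntegrable (by norm_num))
    intro g hg hgs
    have hg₁ : HasCompactSupport (Complex.ofRealCLM ∘ g) := hgs.comp_left rfl
    have hg₂ : ContDiff ℝ (⊤ : ℕ∞) (Complex.ofRealCLM ∘ g) := by fun_prop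
    set G := hg₁.toSchwartzMap hg₂ with hG
    have e1 : ∫ x, g x • (𝓕 F : Lp ℂ 2 (volume : Measure V)) x = ∫ x, (𝓕 G) x • f x := by
      have := congrArg (fun T => T G) (Lp.fourier_toTemperedDistribution_eq F)
      simp only [TemperedDistribution.fourier_apply, Lp.toTemperedDistribution_apply] at this
      calc _ = ∫ x, G x • (𝓕 F : Lp ℂ 2 (volume : Measure V)) x := by simp [hG]
        _ = _ := this.symm
        _ = _ := by
          apply integral_congr_ae
          filter_upwards [h2.coeFn_toLp] with x hx
          rw [hF, hx]
    rw [e1]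
    have := VectorFourier.integral_fourierIntegral_smul_eq_flip (L := innerₗ V)
      (μ := volume) (ν := volume) Real.continuous_fourierChar continuous_inner G.integrable hf
    calc _ = ∫ x, G x • 𝓕 f x := by simp [hG]
      _ = _ := by
        rw [SchwartzMap.fourier_coe]
        simpa using! this.symm
  have hn := Lp.norm_fourier_eq F
  calc ∫⁻ ξ, ‖𝓕 f ξ‖ₑ ^ 2 = ∫⁻ ξ, ‖(𝓕 F : Lp ℂ 2 (volume : Measure V)) ξ‖ₑ ^ 2 := by
        apply lintegral_congr_ae
        filter_upwards [hae] with x hx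
        rw [hx]
    _ = ‖(𝓕 F : Lp ℂ 2 (volume : Measure V))‖ₑ ^ 2 := by
        rw [Lp.enorm_def, eLpNorm_eq_lintegral_rpow_enorm_toReal (by simp) (by simp)]
        simp [← ENNReal.rpow_mul_natCast]
    _ = ‖F‖ₑ ^ 2 := by rw [← ofReal_norm, hn, ofReal_norm]
    _ = ∫⁻ ξ, ‖F ξ‖ₑ ^ 2 := by
        rw [Lp.enorm_def, eLpNorm_eq_lintegral_rpow_enorm_toReal (by simp) (by simp)]
        simp [← ENNReal.rpow_mul_natCast]
    _ ≤ _ := by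
        apply le_of_eq
        apply lintegral_congr_ae
        filter_upwards [h2.coeFn_toLp] with x hx
        rw [hF, hx]

/-! ### Splitting off one coordinate -/

/-- The measurable equivalence `ℝ × ℝⁿ ≃ ℝⁿ⁺¹` inserting the real number as `j`-th coordinate. -/
def glue {n : ℕ} (j : Fin (n + 1)) : ℝ × Ed n ≃ᵐ Ed (n + 1) :=
  ((MeasurableEquiv.refl ℝ).prodCongr (MeasurableEquiv.toLp 2 (Fin n → ℝ)).symm).trans
    ((MeasurableEquiv.piFinSuccAbove (fun _ => ℝ) j).symm.trans
      (MeasurableEquiv.toLp 2 (Fin (n + 1) → ℝ)))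

theorem glue_same {n : ℕ} (j : Fin (n + 1)) (p : ℝ × Ed n) : glue j p j = p.1 :=
  Fin.insertNth_apply_same (α := fun _ => ℝ) j p.1 (WithLp.ofLp p.2)

theorem glue_succAbove {n : ℕ} (j : Fin (n + 1)) (p : ℝ × Ed n) (i : Fin n) :
    glue j p (j.succAbove i) = p.2 i :=
  Fin.insertNth_apply_succAbove (α := fun _ => ℝ) j p.1 (WithLp.ofLp p.2) i

theorem inner_glue {n : ℕ} (j : Fin (n + 1)) (p q : ℝ × Ed n) :
    (⟪glue j p, glue j q⟫ : ℝ) = p.1 * q.1 + ⟪p.2, q.2⟫ := by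
  simp only [PiLp.inner_apply]
  rw [Fin.sum_univ_succAbove _ j]
  simp only [glue_same, glue_succAbove]
  simp [mul_comm]

theorem norm_glue_sq {n : ℕ} (j : Fin (n + 1)) (p : ℝ × Ed n) :
    ‖glue j p‖ ^ 2 = p.1 ^ 2 + ‖p.2‖ ^ 2 := by
  rw [← real_inner_self_eq_norm_sq, inner_glue, real_inner_self_eq_norm_sq]
  ring

theorem measurePreserving_glue {n : ℕ} (j : Fin (n + 1)) :
    MeasurePreserving (glue j) (volume : Measure (ℝ × Ed n)) volume := by
  refine MeasurePreserving.trans (μb := (volume : Measure (ℝ × (Fin n → ℝ)))) ?_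
    (MeasurePreserving.trans (μb := (volume : Measure (Fin (n + 1) → ℝ))) ?_ ?_)
  · exact (MeasurePreserving.id volume).prod (PiLp.volume_preserving_ofLp (Fin n))
  · exact (volume_preserving_piFinSuccAbove (fun _ : Fin (n + 1) => ℝ) j).symm _
  · exact PiLp.volume_preserving_toLp (Fin (n + 1))

/-! ### The slicing estimate -/

/-- Cauchy–Schwarz on the line against the weight `(1 + s²)^δ`. -/
theorem sq_lintegral_le (δ : ℝ) (u : ℝ → ℝ≥0∞) (hu : AEMeasurable u) :
    (∫⁻ s, u s) ^ 2 ≤ (∫⁻ t : ℝ, ENNReal.ofReal ((1 + t ^ 2) ^ (-δ))) *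
      ∫⁻ s, ENNReal.ofReal ((1 + s ^ 2) ^ δ) * u s ^ 2 := by
  have hpos : ∀ s : ℝ, 0 < 1 + s ^ 2 := fun s => by positivity
  have hh := ENNReal.lintegral_mul_le_Lp_mul_Lq volume Real.HolderConjugate.two_two
    (f := fun t : ℝ => ENNReal.ofReal ((1 + t ^ 2) ^ (-δ / 2)))
    (g := fun t : ℝ => ENNReal.ofReal ((1 + t ^ 2) ^ (δ / 2)) * u t)
    (by fun_prop) (by fun_prop)
  have e1 : ∀ t : ℝ, ENNReal.ofReal ((1 + t ^ 2) ^ (-δ / 2)) *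
      (ENNReal.ofReal ((1 + t ^ 2) ^ (δ / 2)) * u t) = u t := by
    intro t
    rw [← mul_assoc, ← ENNReal.ofReal_mul (by positivity), ← Real.rpow_add (hpos t)]
    simp [neg_div]
  have e2 : ∀ t : ℝ, (ENNReal.ofReal ((1 + t ^ 2) ^ (-δ / 2))) ^ 2 =
      ENNReal.ofReal ((1 + t ^ 2) ^ (-δ)) := by
    intro t
    rw [← ENNReal.ofReal_pow (by positivity), ← Real.rpow_mul_natCast (hpos t).le]
    congr 2; push_cast; ring
  have e3 : ∀ t : ℝ, (ENNReal.ofReal ((1 + t ^ 2) ^ (δ / 2)) * u t) ^ 2 =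
      ENNReal.ofReal ((1 + t ^ 2) ^ δ) * u t ^ 2 := by
    intro t
    rw [mul_pow, ← ENNReal.ofReal_pow (by positivity), ← Real.rpow_mul_natCast (hpos t).le]
    congr 3; push_cast; ring
  simp only [Pi.mul_apply, e1, ENNReal.rpow_two, e2, e3] at hh
  calc _ ≤ _ := pow_le_pow_left₀ (by simp) hh 2
    _ = _ := by
      rw [mul_pow, ← ENNReal.rpow_mul_natCast, ← ENNReal.rpow_mul_natCast]
      simp

/-- The trace estimate in the `j`-th direction: if all lines in that direction meet `A` in length
at most `a`, then `∫_A |𝓕 f|²` is at most `a` times a weighted `L²` norm of `f`. The pointwise bound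
`hpt` on `𝓕 f` does not depend on the `j`-th frequency, and Plancherel handles the others. -/
theorem slice_bound {n : ℕ} (j : Fin (n + 1)) {f : Ed (n + 1) → ℂ} (hf : Integrable f)
    (δ : ℝ) {A : Set (Ed (n + 1))} (hAm : MeasurableSet A) {a : ℝ≥0∞}
    (hA : ∀ η : Ed n, volume {t : ℝ | glue j (t, η) ∈ A} ≤ a) :
    ∫⁻ ξ in A, ‖𝓕 f ξ‖ₑ ^ 2 ≤ a * ((∫⁻ t : ℝ, ENNReal.ofReal ((1 + t ^ 2) ^ (-δ))) *
      ∫⁻ y, ENNReal.ofReal ((1 + (y j) ^ 2) ^ δ) * ‖f y‖ₑ ^ 2) := by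
  wlog hfm : StronglyMeasurable f generalizing f
  · have h0 := hf.1.ae_eq_mk
    have h1 := this (hf.congr h0) hf.1.stronglyMeasurable_mk
    have e1 : 𝓕 (hf.1.mk f) = 𝓕 f := by
      ext ξ
      simp only [Real.fourier_eq]
      apply integral_congr_ae
      filter_upwards [h0] with x hx
      rw [hx]
    have e2 : ∫⁻ y, ENNReal.ofReal ((1 + (y j) ^ 2) ^ δ) * ‖hf.1.mk f y‖ₑ ^ 2 =
        ∫⁻ y, ENNReal.ofReal ((1 + (y j) ^ 2) ^ δ) * ‖f y‖ₑ ^ 2 := by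
      apply lintegral_congr_ae
      filter_upwards [h0] with x hx
      rw [hx]
    rwa [e1, e2] at h1
  have hφ := measurePreserving_glue j
  have hφe := (glue j).measurableEmbedding
  have hfglue : Integrable (fun p : ℝ × Ed n => f (glue j p)) (volume.prod volume) :=
    hφ.integrable_comp_of_integrable hf
  have hfg : StronglyMeasurable (fun p : ℝ × Ed n => f (glue j p)) :=
    hfm.comp_measurable (glue j).measurable
  -- `g s` is the partial Fourier transform of `f` in the variables other than the `j`-th, which is
  -- fixed to the value `s`.
  obtain ⟨g, hg⟩ : ∃ g : ℝ → Ed n → ℂ, ∀ s, g s = 𝓕 (fun x => f (glue j (s, x))) :=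
    ⟨_, fun _ => rfl⟩
  have hgm : StronglyMeasurable (Function.uncurry g) := by
    have : Function.uncurry g = fun q : ℝ × Ed n =>
        ∫ x, Real.fourierChar (-⟪x, q.2⟫) • f (glue j (q.1, x)) := by
      ext ⟨s, η⟩
      simp [hg, Function.uncurry, Real.fourier_eq]
    rw [this]
    apply StronglyMeasurable.integral_prod_right (f := fun (q : ℝ × Ed n) (x : Ed n) =>
      Real.fourierChar (-⟪x, q.2⟫) • f (glue j (q.1, x)))
    apply StronglyMeasurable.smul
    · apply Continuous.stronglyMeasurable
      exact (continuous_induced_dom.comp Real.continuous_fourierChar).comp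
        (by fun_prop : Continuous fun z : (ℝ × Ed n) × Ed n => -(⟪z.2, z.1.2⟫ : ℝ))
    · exact hfg.comp_measurable (g := fun z : (ℝ × Ed n) × Ed n => (z.1.1, z.2)) (by fun_prop)
  have hgme : Measurable fun q : ℝ × Ed n => ‖g q.1 q.2‖ₑ := hgm.enorm
  have hFub : ∀ t η, 𝓕 f (glue j (t, η)) = ∫ s, Real.fourierChar (-(s * t)) • g s η := by
    intro t η
    rw [Real.fourier_eq, ← hφ.integral_comp hφe, Measure.volume_eq_prod, integral_prod]
    · apply integral_congr_ae
      filter_upwards with s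
      simp only [hg, Real.fourier_eq]
      rw [Circle.smul_def, ← integral_smul]
      apply integral_congr_ae
      filter_upwards with x
      rw [inner_glue, neg_add, AddChar.map_add_eq_mul, mul_smul, Circle.smul_def]
    · exact hφ.integrable_comp_of_integrable
        ((Real.fourierIntegral_convergent_iff (glue j (t, η))).2 hf)
  set K := ∫⁻ t : ℝ, ENNReal.ofReal ((1 + t ^ 2) ^ (-δ)) with hK
  set H : Ed n → ℝ≥0∞ := fun η => ∫⁻ s, ENNReal.ofReal ((1 + s ^ 2) ^ δ) * ‖g s η‖ₑ ^ 2 with hH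
  have hpt : ∀ t η, ‖𝓕 f (glue j (t, η))‖ₑ ^ 2 ≤ K * H η := by
    intro t η
    refine le_trans (pow_le_pow_left₀ (by simp) ?_ 2) (sq_lintegral_le δ (fun s => ‖g s η‖ₑ) ?_)
    · rw [hFub]
      refine (enorm_integral_le_lintegral_enorm _).trans (le_of_eq ?_)
      apply lintegral_congr
      intro s
      rw [← ofReal_norm, ← ofReal_norm]
      simp
    · exact (hgme.comp (by fun_prop : Measurable fun s : ℝ => (s, η))).aemeasurable
  have hHm : Measurable H := by
    exact Measurable.lintegral_prod_left' (f := fun q : ℝ × Ed n =>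
      ENNReal.ofReal ((1 + q.1 ^ 2) ^ δ) * ‖g q.1 q.2‖ₑ ^ 2) (by fun_prop)
  have hHint : ∫⁻ η, H η ≤ ∫⁻ y, ENNReal.ofReal ((1 + (y j) ^ 2) ^ δ) * ‖f y‖ₑ ^ 2 := by
    rw [hH, lintegral_lintegral_swap,
      ← hφ.lintegral_comp_emb hφe (fun y => ENNReal.ofReal ((1 + (y j) ^ 2) ^ δ) * ‖f y‖ₑ ^ 2),
      Measure.volume_eq_prod ℝ (Ed n), lintegral_prod]
    · apply lintegral_mono_ae
      filter_upwards [hfglue.prod_right_ae] with s hs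
      simp only [glue_same]
      rw [lintegral_const_mul' _ _ ENNReal.ofReal_ne_top,
        lintegral_const_mul' _ _ ENNReal.ofReal_ne_top]
      rw [hg]
      exact mul_le_mul_right (lintegral_fourier_sq_le hs) _
    · simp only [glue_same]
      exact ((by fun_prop : Measurable fun q : ℝ × Ed n =>
        ENNReal.ofReal ((1 + q.1 ^ 2) ^ δ)).mul (hfg.enorm.pow_const 2)).aemeasurable
    · have : Measurable fun q : Ed n × ℝ => ‖g q.2 q.1‖ₑ :=
        hgme.comp (measurable_snd.prodMk measurable_fst)
      exact ((by fun_prop : Measurable fun q : Ed n × ℝ =>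
        ENNReal.ofReal ((1 + q.2 ^ 2) ^ δ)).mul (this.pow_const 2)).aemeasurable
  calc ∫⁻ ξ in A, ‖𝓕 f ξ‖ₑ ^ 2
      = ∫⁻ p : ℝ × Ed n, (glue j ⁻¹' A).indicator (fun p => ‖𝓕 f (glue j p)‖ₑ ^ 2) p := by
        rw [lintegral_indicator ((glue j).measurable hAm),
          hφ.setLIntegral_comp_preimage_emb hφe (fun ξ => ‖𝓕 f ξ‖ₑ ^ 2)]
    _ ≤ ∫⁻ p : ℝ × Ed n, (glue j ⁻¹' A).indicator (fun p => K * H p.2) p := by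
        apply lintegral_mono
        intro p
        exact Set.indicator_le_indicator (hpt p.1 p.2)
    _ = ∫⁻ η, ∫⁻ t, (glue j ⁻¹' A).indicator (fun p => K * H p.2) (t, η) := by
        rw [Measure.volume_eq_prod, lintegral_prod_symm]
        apply Measurable.aemeasurable
        exact ((hHm.comp measurable_snd).const_mul K).indicator ((glue j).measurable hAm)
    _ = ∫⁻ η, K * H η * volume {t : ℝ | glue j (t, η) ∈ A} := by
        apply lintegral_congr
        intro η
        rw [← lintegral_indicator_const]
        · rfl
        · exact (((glue j).measurable.comp (by fun_prop : Measurable fun t : ℝ => (t, η))) hAm)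
    _ ≤ ∫⁻ η, (K * a) * H η := by
        apply lintegral_mono
        intro η
        calc K * H η * volume {t : ℝ | glue j (t, η) ∈ A} ≤ K * H η * a := by gcongr; exact hA η
          _ = _ := by ring
    _ = K * a * ∫⁻ η, H η := lintegral_const_mul _ hHm
    _ ≤ _ := by
        rw [mul_comm K a, mul_assoc]
        gcongr

/-! ### Thin shells -/

/-- On a set of positive `t` with `a² ≤ t² + m ≤ b²` and `a ≤ √D t`, any two points `x`, `y` satisfy
`(x - y) (x + y) ≤ b² - a² ≤ 3 a (b - a)` and `x + y ≥ 2 a / D`, which bounds the diameter. -/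
theorem volume_slice_half_le {D a b m : ℝ} (hD : 1 ≤ D) (ha : 0 < a) (hb : b ≤ 2 * a)
    {P : Set ℝ} (hP : ∀ t ∈ P, 0 < t ∧ a ^ 2 ≤ t ^ 2 + m ∧ t ^ 2 + m ≤ b ^ 2 ∧ a ^ 2 ≤ D * t ^ 2)
    (hab : a ≤ b) : volume P ≤ ENNReal.ofReal (3 * D * (b - a) / 2) := by
  refine (Real.volume_le_diam P).trans (Metric.ediam_le ?_)
  have key : ∀ x ∈ P, ∀ y ∈ P, x - y ≤ 3 * D * (b - a) / 2 := by
    intro x hx y hy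
    obtain ⟨x0, x1, x2, x3⟩ := hP x hx
    obtain ⟨y0, y1, y2, y3⟩ := hP y hy
    have aux : ∀ z : ℝ, 0 < z → a ^ 2 ≤ D * z ^ 2 → a ≤ D * z := by
      intro z z0 hz
      have hDz : (0 : ℝ) ≤ D * z := by positivity
      refine (pow_le_pow_iff_left₀ ha.le hDz two_ne_zero).1 ?_
      calc a ^ 2 ≤ D * z ^ 2 := hz
        _ ≤ D * (D * z ^ 2) := le_mul_of_one_le_left (by positivity) hD
        _ = (D * z) ^ 2 := by ring
    have lx : a ≤ D * x := aux x x0 x3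
    have ly : a ≤ D * y := aux y y0 y3
    have h1 : (x - y) * (x + y) ≤ 3 * a * (b - a) := by nlinarith
    by_contra! h
    have h2 : 0 < x - y := lt_of_le_of_lt (by have := sub_nonneg.2 hab; positivity) h
    nlinarith [mul_pos h2 ha]
  intro x hx y hy
  rw [edist_dist, Real.dist_eq]
  exact ENNReal.ofReal_le_ofReal (abs_sub_le_iff.2 ⟨key x hx y hy, key y hy x hx⟩)

/-- The part of the shell `a ≤ ‖ξ‖ ≤ b` in `ℝⁿ⁺¹` where the `j`-th coordinate carries at least the
fraction `1 / (n + 1)` of `‖ξ‖²`. -/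
def shellPiece (n : ℕ) (j : Fin (n + 1)) (a b : ℝ) : Set (Ed (n + 1)) :=
  {ξ | a ≤ ‖ξ‖ ∧ ‖ξ‖ ≤ b ∧ ‖ξ‖ ^ 2 ≤ (n + 1 : ℝ) * (ξ j) ^ 2}

theorem volume_slice_le {n : ℕ} (j : Fin (n + 1)) {a b : ℝ} (ha : 0 < a) (hab : a ≤ b)
    (hb : b ≤ 2 * a) (η : Ed n) :
    volume {t : ℝ | glue j (t, η) ∈ shellPiece n j a b} ≤
      ENNReal.ofReal (3 * (n + 1 : ℝ) * (b - a)) := by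
  set T := {t : ℝ | glue j (t, η) ∈ shellPiece n j a b} with hT
  have hD : (1 : ℝ) ≤ n + 1 := by simp
  have hmem : ∀ t ∈ T, a ^ 2 ≤ t ^ 2 + ‖η‖ ^ 2 ∧ t ^ 2 + ‖η‖ ^ 2 ≤ b ^ 2 ∧
      a ^ 2 ≤ (n + 1 : ℝ) * t ^ 2 := by
    rintro t ⟨h1, h2, h3⟩
    have h4 := pow_le_pow_left₀ ha.le h1 2
    have h5 := pow_le_pow_left₀ (norm_nonneg _) h2 2
    rw [glue_same] at h3
    have h6 := h4.trans h3
    rw [norm_glue_sq] at h4 h5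
    exact ⟨h4, h5, h6⟩
  have hsub : T ⊆ (T ∩ Set.Ioi 0) ∪ (Neg.neg ⁻¹' (Neg.neg ⁻¹' T ∩ Set.Ioi 0)) := by
    intro t ht
    rcases lt_trichotomy t 0 with h | h | h
    · right; simp [h, ht]
    · subst h
      have := (hmem 0 ht).2.2
      nlinarith
    · left; exact ⟨ht, h⟩
  have v1 : volume (T ∩ Set.Ioi 0) ≤ ENNReal.ofReal (3 * (n + 1 : ℝ) * (b - a) / 2) :=
    volume_slice_half_le (m := ‖η‖ ^ 2) hD ha hb (fun t ht => ⟨ht.2, hmem t ht.1⟩) hab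
  have v2 : volume (Neg.neg ⁻¹' T ∩ Set.Ioi (0 : ℝ)) ≤
      ENNReal.ofReal (3 * (n + 1 : ℝ) * (b - a) / 2) :=
    volume_slice_half_le (m := ‖η‖ ^ 2) hD ha hb
      (fun t ht => ⟨ht.2, by simpa using hmem (-t) ht.1⟩) hab
  have h0 : 0 ≤ 3 * (n + 1 : ℝ) * (b - a) / 2 := by
    have := sub_nonneg.2 hab
    positivity
  calc volume T ≤ volume (T ∩ Set.Ioi 0) +
        volume (Neg.neg ⁻¹' (Neg.neg ⁻¹' T ∩ Set.Ioi (0 : ℝ))) :=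
        (measure_mono hsub).trans (measure_union_le _ _)
    _ ≤ _ := by
      rw [Measure.measure_preimage_neg]
      refine (add_le_add v1 v2).trans (le_of_eq ?_)
      rw [← ENNReal.ofReal_add h0 h0]
      congr 1; ring

/-- The shell is covered by its `n + 1` pieces `shellPiece`, since the coordinate of `ξ` of largest
absolute value carries at least the average share of `‖ξ‖²`; `slice_bound` applies to each piece. -/
theorem shell_bound {n : ℕ} {f : Ed (n + 1) → ℂ} (hf : Integrable f) {δ : ℝ} (hδ : 0 ≤ δ)
    {a b : ℝ} (ha : 0 < a) (hab : a ≤ b) (hb : b ≤ 2 * a) :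
    ∫⁻ ξ in {ξ : Ed (n + 1) | a ≤ ‖ξ‖ ∧ ‖ξ‖ ≤ b}, ‖𝓕 f ξ‖ₑ ^ 2 ≤
      (n + 1) * (ENNReal.ofReal (3 * (n + 1 : ℝ) * (b - a)) *
        ((∫⁻ t : ℝ, ENNReal.ofReal ((1 + t ^ 2) ^ (-δ))) *
          ∫⁻ y, ENNReal.ofReal ((1 + ‖y‖ ^ 2) ^ δ) * ‖f y‖ₑ ^ 2)) := by
  have hcov : {ξ : Ed (n + 1) | a ≤ ‖ξ‖ ∧ ‖ξ‖ ≤ b} ⊆ ⋃ j, shellPiece n j a b := by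
    rintro ξ ⟨h1, h2⟩
    obtain ⟨j, -, hj⟩ := Finset.exists_max_image Finset.univ (fun j => (ξ j) ^ 2)
      Finset.univ_nonempty
    refine Set.mem_iUnion.2 ⟨j, h1, h2, ?_⟩
    rw [EuclideanSpace.real_norm_sq_eq]
    refine (Finset.sum_le_card_nsmul _ _ _ hj).trans (le_of_eq ?_)
    simp
  have hm : ∀ j, MeasurableSet (shellPiece n j a b) := by
    intro j
    unfold shellPiece
    measurability
  have hcoord : ∀ (j : Fin (n + 1)) (y : Ed (n + 1)), (y j) ^ 2 ≤ ‖y‖ ^ 2 := by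
    intro j y
    rw [EuclideanSpace.real_norm_sq_eq]
    exact Finset.single_le_sum (f := fun i => (y i) ^ 2) (fun i _ => sq_nonneg _)
      (Finset.mem_univ j)
  calc _ ≤ ∫⁻ ξ in ⋃ j, shellPiece n j a b, ‖𝓕 f ξ‖ₑ ^ 2 := lintegral_mono_set hcov
    _ ≤ ∑' j, ∫⁻ ξ in shellPiece n j a b, ‖𝓕 f ξ‖ₑ ^ 2 := lintegral_iUnion_le _ _
    _ = ∑ j, ∫⁻ ξ in shellPiece n j a b, ‖𝓕 f ξ‖ₑ ^ 2 := tsum_fintype _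
    _ ≤ ∑ _j : Fin (n + 1), (ENNReal.ofReal (3 * (n + 1 : ℝ) * (b - a)) *
        ((∫⁻ t : ℝ, ENNReal.ofReal ((1 + t ^ 2) ^ (-δ))) *
          ∫⁻ y : Ed (n + 1), ENNReal.ofReal ((1 + ‖y‖ ^ 2) ^ δ) * ‖f y‖ₑ ^ 2)) := by
        apply Finset.sum_le_sum
        intro j _
        refine (slice_bound j hf δ (hm j) (volume_slice_le j ha hab hb)).trans ?_
        gcongr ?_ * (?_ * ?_)
        · exact le_rfl
        · exact le_rfl
        · refine lintegral_mono fun y => ?_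
          gcongr ?_ * _
          exact ENNReal.ofReal_le_ofReal
            (Real.rpow_le_rpow (by positivity) (by linarith [hcoord j y]) hδ)
    _ = _ := by simp

/-! ### From shells to the sphere -/

/-- Integration in polar coordinates. -/
theorem lintegral_polar {d : ℕ} (hd : 1 ≤ d) {H : Ed d → ℝ≥0∞} (hH : Measurable H) :
    ∫⁻ ξ, H ξ = ∫⁻ θ, (∫⁻ r in Set.Ioi (0 : ℝ),
      ENNReal.ofReal (r ^ (d - 1)) * H (r • (θ : Ed d))) ∂(sphMeasure d) := by
  have : Nonempty (Fin d) := ⟨⟨0, hd⟩⟩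
  have hmp := (volume : Measure (Ed d)).measurePreserving_homeomorphUnitSphereProd
  have hmeas : Measurable fun p : sphere (0 : Ed d) 1 × Set.Ioi (0 : ℝ) =>
      H ((p.2 : ℝ) • (p.1 : Ed d)) := by
    refine hH.comp ?_
    fun_prop
  calc ∫⁻ ξ, H ξ = ∫⁻ ξ : ({(0)}ᶜ : Set (Ed d)), H ξ ∂(volume.comap Subtype.val) := by
        rw [lintegral_subtype_comap (measurableSet_singleton _).compl, restrict_compl_singleton]
    _ = ∫⁻ p, H ((p.2 : ℝ) • (p.1 : Ed d)) ∂((volume : Measure (Ed d)).toSphere.prod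
          (.volumeIoiPow (Module.finrank ℝ (Ed d) - 1))) := by
        rw [← hmp.lintegral_comp hmeas]
        refine lintegral_congr fun ξ => ?_
        congr 1
        exact (congrArg Subtype.val ((homeomorphUnitSphereProd (Ed d)).symm_apply_apply ξ)).symm
    _ = ∫⁻ θ, ∫⁻ r, H ((r : ℝ) • (θ : Ed d)) ∂(Measure.volumeIoiPow (d - 1))
          ∂(sphMeasure d) := by
        rw [lintegral_prod _ hmeas.aemeasurable, finrank_euclideanSpace_fin]
        rfl
    _ = _ := by
        refine lintegral_congr fun θ => ?_
        rw [Measure.volumeIoiPow, lintegral_withDensity_eq_lintegral_mul]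
        · exact lintegral_subtype_comap measurableSet_Ioi
            (fun r : ℝ => ENNReal.ofReal (r ^ (d - 1)) * H (r • (θ : Ed d)))
        · fun_prop
        · exact hmeas.comp (measurable_const.prodMk measurable_id)

/-- If `G` on the sphere is dominated, up to an error `c`, by `F` along every radial segment
`[a, b]`, then `∫ G` times `(b - a) a^(d-1)` is dominated by the integral of `F` over the shell, up to
the corresponding error. -/
theorem polar_lower {d : ℕ} (hd : 1 ≤ d) {F : Ed d → ℝ≥0∞} (hF : Measurable F) {a b : ℝ}
    (ha : 0 < a) {c : ℝ≥0∞} {G : sphere (0 : Ed d) 1 → ℝ≥0∞}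
    (hG : ∀ θ r, a ≤ r → r ≤ b → G θ ≤ F (r • (θ : Ed d)) + c) :
    ENNReal.ofReal (b - a) * ENNReal.ofReal (a ^ (d - 1)) * ∫⁻ θ, G θ ∂(sphMeasure d) ≤
      (∫⁻ ξ in {ξ : Ed d | a ≤ ‖ξ‖ ∧ ‖ξ‖ ≤ b}, F ξ) +
        ENNReal.ofReal (b - a) * ENNReal.ofReal (a ^ (d - 1)) * (c * sphMeasure d Set.univ) := by
  set B := {ξ : Ed d | a ≤ ‖ξ‖ ∧ ‖ξ‖ ≤ b} with hB
  have hBm : MeasurableSet B := by rw [hB]; measurability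
  have hpolar : ∫⁻ ξ in B, F ξ = ∫⁻ θ, (∫⁻ r in Set.Icc a b,
      ENNReal.ofReal (r ^ (d - 1)) * F (r • (θ : Ed d))) ∂(sphMeasure d) := by
    rw [← lintegral_indicator hBm, lintegral_polar hd (hF.indicator hBm)]
    refine lintegral_congr fun θ => ?_
    have hsub : Set.Icc a b ⊆ Set.Ioi 0 := fun r hr => ha.trans_le hr.1
    rw [← Set.inter_eq_self_of_subset_left hsub, ← Measure.restrict_restrict measurableSet_Icc,
      ← lintegral_indicator measurableSet_Icc]
    refine setLIntegral_congr_fun measurableSet_Ioi fun r hr => ?_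
    have hnorm : ‖r • (θ : Ed d)‖ = r := by
      rw [norm_smul, norm_eq_of_mem_sphere θ, mul_one, Real.norm_of_nonneg (le_of_lt hr)]
    by_cases h : r ∈ Set.Icc a b
    · have h' : r • (θ : Ed d) ∈ B := by rw [hB, Set.mem_ofPred_eq, hnorm]; exact h
      simp only [Set.indicator_of_mem h, Set.indicator_of_mem h']
    · have h' : r • (θ : Ed d) ∉ B := by rw [hB, Set.mem_ofPred_eq, hnorm]; exact h
      simp only [Set.indicator_of_notMem h, Set.indicator_of_notMem h', mul_zero]
  have hinner : ∀ θ : sphere (0 : Ed d) 1,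
      ENNReal.ofReal (b - a) * ENNReal.ofReal (a ^ (d - 1)) * G θ ≤
      (∫⁻ r in Set.Icc a b, ENNReal.ofReal (r ^ (d - 1)) * F (r • (θ : Ed d))) +
        ENNReal.ofReal (b - a) * ENNReal.ofReal (a ^ (d - 1)) * c := by
    intro θ
    calc ENNReal.ofReal (b - a) * ENNReal.ofReal (a ^ (d - 1)) * G θ
        = ∫⁻ r in Set.Icc a b, ENNReal.ofReal (a ^ (d - 1)) * G θ := by
          simp; ring
      _ ≤ ∫⁻ r in Set.Icc a b, (ENNReal.ofReal (r ^ (d - 1)) * F (r • (θ : Ed d)) +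
            ENNReal.ofReal (a ^ (d - 1)) * c) := by
          apply setLIntegral_mono' measurableSet_Icc
          intro r hr
          refine (mul_le_mul_right (hG θ r hr.1 hr.2) _).trans ?_
          rw [mul_add]
          gcongr
          exact hr.1
      _ = _ := by
          rw [lintegral_add_right _ measurable_const]
          simp; ring
  calc _ ≤ _ := le_of_eq (lintegral_const_mul' _ _ (by finiteness)).symm
    _ ≤ _ := lintegral_mono hinner
    _ = _ := by
      rw [lintegral_add_right _ measurable_const, lintegral_const, hpolar]
      ring

/-- The restriction estimate for the Fourier transform on the sphere of radius `a`, uniform in `a`: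
by uniform continuity of `|𝓕 f|²` on compact sets, its integral over the sphere differs by an
arbitrarily small error from its average over a thin enough shell, to which `shell_bound` applies. -/
theorem sphere_bound {n : ℕ} {f : Ed (n + 1) → ℂ} (hf : Integrable f) {δ : ℝ} (hδ : 0 ≤ δ)
    {a : ℝ} (ha : 0 < a) :
    ENNReal.ofReal (a ^ n) * ∫⁻ θ : sphere (0 : Ed (n + 1)) 1,
        ‖𝓕 f (a • (θ : Ed (n + 1)))‖ₑ ^ 2 ∂(sphMeasure (n + 1)) ≤
      (n + 1) * (ENNReal.ofReal (3 * (n + 1 : ℝ)) *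
        ((∫⁻ t : ℝ, ENNReal.ofReal ((1 + t ^ 2) ^ (-δ))) *
          ∫⁻ y, ENNReal.ofReal ((1 + ‖y‖ ^ 2) ^ δ) * ‖f y‖ₑ ^ 2)) := by
  have hcont : Continuous (𝓕 f) :=
    VectorFourier.fourierIntegral_continuous Real.continuous_fourierChar
      (L := innerₗ (Ed (n + 1))) continuous_inner hf
  have hsq : ∀ ξ, ‖𝓕 f ξ‖ₑ ^ 2 = ENNReal.ofReal (‖𝓕 f ξ‖ ^ 2) := by
    intro ξ
    rw [ENNReal.ofReal_pow (norm_nonneg _), ofReal_norm]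
  have hgc : Continuous fun ξ => ‖𝓕 f ξ‖ ^ 2 := by fun_prop
  have hF : Measurable fun ξ => ‖𝓕 f ξ‖ₑ ^ 2 := by
    simp only [hsq]
    exact hgc.measurable.ennreal_ofReal
  have hunif := (isCompact_closedBall (0 : Ed (n + 1)) (2 * a)).uniformContinuousOn_of_continuous
    hgc.continuousOn
  rw [Metric.uniformContinuousOn_iff] at hunif
  set M := (n + 1) * (ENNReal.ofReal (3 * (n + 1 : ℝ)) *
        ((∫⁻ t : ℝ, ENNReal.ofReal ((1 + t ^ 2) ^ (-δ))) *
          ∫⁻ y, ENNReal.ofReal ((1 + ‖y‖ ^ 2) ^ δ) * ‖f y‖ₑ ^ 2)) with hM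
  set S := sphMeasure (n + 1) Set.univ with hS
  have hSfin : S ≠ ⊤ := by
    rw [hS, sphMeasure]
    exact measure_ne_top _ _
  have key : ∀ η : ℝ, 0 < η → ENNReal.ofReal (a ^ n) * ∫⁻ θ : sphere (0 : Ed (n + 1)) 1,
        ‖𝓕 f (a • (θ : Ed (n + 1)))‖ₑ ^ 2 ∂(sphMeasure (n + 1)) ≤
        M + ENNReal.ofReal η * (ENNReal.ofReal (a ^ n) * S) := by
    intro η hη
    obtain ⟨ε, hε, hclose⟩ := hunif η hη
    set b := a + min a (ε / 2) with hb
    have hm0 : 0 < min a (ε / 2) := lt_min ha (by positivity)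
    have hba : 0 < b - a := by simpa [hb] using hm0
    have hb2 : b ≤ 2 * a := by linarith [min_le_left a (ε / 2)]
    have hbε : b - a < ε := by linarith [min_le_right a (ε / 2)]
    have hG : ∀ (θ : sphere (0 : Ed (n + 1)) 1) r, a ≤ r → r ≤ b →
        ‖𝓕 f (a • (θ : Ed (n + 1)))‖ₑ ^ 2 ≤
          ‖𝓕 f (r • (θ : Ed (n + 1)))‖ₑ ^ 2 + ENNReal.ofReal η := by
      intro θ r har hrb
      rw [hsq, hsq, ← ENNReal.ofReal_add (by positivity) hη.le]
      apply ENNReal.ofReal_le_ofReal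
      have hmem : ∀ s : ℝ, a ≤ s → s ≤ b → s • (θ : Ed (n + 1)) ∈ closedBall 0 (2 * a) := by
        intro s h1 h2
        rw [mem_closedBall_zero_iff, norm_smul, norm_eq_of_mem_sphere θ, mul_one,
          Real.norm_of_nonneg (ha.le.trans h1)]
        exact h2.trans hb2
      have hd : dist (a • (θ : Ed (n + 1))) (r • (θ : Ed (n + 1))) < ε := by
        rw [dist_eq_norm, ← sub_smul, norm_smul, norm_eq_of_mem_sphere θ, mul_one,
          Real.norm_eq_abs, abs_lt]
        constructor <;> linarith
      have := hclose _ (hmem a le_rfl (by linarith)) _ (hmem r har hrb) hd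
      rw [Real.dist_eq, abs_lt] at this
      linarith [this.2]
    have h1 := (polar_lower (Nat.le_add_left 1 n) hF ha hG).trans
      (add_le_add_left (shell_bound hf hδ ha (by linarith) hb2) _)
    rw [Nat.add_sub_cancel] at h1
    have h2 : ENNReal.ofReal (3 * (n + 1 : ℝ) * (b - a)) =
        ENNReal.ofReal (3 * (n + 1 : ℝ)) * ENNReal.ofReal (b - a) :=
      ENNReal.ofReal_mul (by positivity)
    rw [h2] at h1
    have hpos : ENNReal.ofReal (b - a) ≠ 0 := by simpa using hba
    refine (ENNReal.mul_le_mul_iff_right hpos ENNReal.ofReal_ne_top).1 ?_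
    calc _ = _ := (mul_assoc _ _ _).symm
      _ ≤ _ := h1
      _ = _ := by rw [hM, hS]; ring
  have hlim : Tendsto (fun η : ℝ => M + ENNReal.ofReal η * (ENNReal.ofReal (a ^ n) * S))
      (𝓝[>] 0) (𝓝 M) := by
    have hc : Continuous fun η : ℝ => M + ENNReal.ofReal η * (ENNReal.ofReal (a ^ n) * S) :=
      continuous_const.add ((ENNReal.continuous_mul_const (by finiteness)).comp
        ENNReal.continuous_ofReal)
    have := hc.tendsto 0
    simp only [ENNReal.ofReal_zero, zero_mul, add_zero] at this
    exact this.mono_left nhdsWithin_le_nhds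
  exact ge_of_tendsto hlim (eventually_mem_nhdsWithin.mono fun η hη => key η hη)

theorem lintegral_weight_lt_top {δ : ℝ} (hδ : 1 / 2 < δ) :
    ∫⁻ t : ℝ, ENNReal.ofReal ((1 + t ^ 2) ^ (-δ)) < ⊤ := by
  have h := integrable_rpow_neg_one_add_norm_sq (E := ℝ) (μ := volume) (r := 2 * δ)
    (by simp; linarith)
  have h2 := h.lintegral_lt_top
  refine lt_of_le_of_lt (le_of_eq ?_) h2
  refine lintegral_congr fun t => ?_
  rw [Real.norm_eq_abs, sq_abs]
  congr 2
  ring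

/-! ### Plane waves and norms -/

theorem enorm_pw (k : ℝ) {d : ℕ} (θ x : Ed d) : ‖pw k θ x‖ₑ = 1 := by
  rw [← ofReal_norm, pw, Complex.norm_exp]
  simp

theorem pw_neg_sub (k : ℝ) {d : ℕ} (θ θ0 x : Ed d) :
    pw (-k) (θ - θ0) x = pw (-k) θ x * pw k θ0 x := by
  simp only [pw, ← Complex.exp_add, inner_sub_left]
  congr 1
  push_cast
  ring

theorem continuous_pw (k : ℝ) {d : ℕ} (θ : Ed d) : Continuous (pw k θ) := by
  unfold pw
  fun_prop

theorem integrable_pw_mul_iff (k : ℝ) {d : ℕ} (θ : Ed d) (f : Ed d → ℂ) :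
    Integrable (fun y => pw k θ y * f y) ↔ Integrable f := by
  have key : ∀ (k : ℝ) (g : Ed d → ℂ), Integrable g → Integrable (fun y => pw k θ y * g y) := by
    intro k g hg
    refine hg.mono ((continuous_pw k θ).aestronglyMeasurable.mul hg.1) (.of_forall fun y => ?_)
    refine enorm_le_iff_norm_le.1 ?_
    rw [enorm_mul, enorm_pw, one_mul]
  refine ⟨fun h => ?_, key k f⟩
  refine (key (-k) _ h).congr (.of_forall fun y => ?_)
  simp only [← mul_assoc]
  rw [← pw_neg_sub]
  simp [pw]

/-- `Sop` is the Fourier transform of the modulated function restricted to the sphere of radius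
`k / (2π)`; the factor `2π` reflects the convention `e^{-2πi⟨y, ξ⟩}` of `𝓕`. -/
theorem Sop_eq_fourier {d : ℕ} (k : ℝ) (θ0 : Ed d) (f : Ed d → ℂ) (θ : Ed d) :
    Sop d k θ0 f θ = 𝓕 (fun y => pw k θ0 y * f y) ((k / (2 * Real.pi)) • θ) := by
  rw [Sop, Real.fourier_eq']
  refine integral_congr_ae (.of_forall fun y => ?_)
  simp only [pw_neg_sub, smul_eq_mul, mul_assoc]
  congr 1
  rw [pw]
  congr 1
  rw [inner_smul_right, real_inner_comm]
  have : (Real.pi : ℂ) ≠ 0 := by exact_mod_cast Real.pi_ne_zero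
  push_cast
  field_simp

theorem eLpNorm_two_sq {α : Type*} [MeasurableSpace α] (μ : Measure α) (g : α → ℂ) :
    eLpNorm g 2 μ ^ 2 = ∫⁻ x, ‖g x‖ₑ ^ 2 ∂μ := by
  rw [eLpNorm_eq_lintegral_rpow_enorm_toReal two_ne_zero ENNReal.ofNat_ne_top,
    ← ENNReal.rpow_natCast, ← ENNReal.rpow_mul]
  simp

theorem wNorm_two_sq {d : ℕ} (δ : ℝ) (f : Ed d → ℂ) :
    wNorm d 2 δ f ^ 2 = ∫⁻ y, ENNReal.ofReal ((1 + ‖y‖ ^ 2) ^ δ) * ‖f y‖ₑ ^ 2 := by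
  rw [wNorm, ENNReal.ofReal_ofNat, eLpNorm_two_sq]
  refine lintegral_congr fun y => ?_
  have h0 : (0 : ℝ) ≤ 1 + ‖y‖ ^ 2 := by positivity
  have h1 : 0 ≤ jap δ y := by rw [jap]; positivity
  rw [enorm_mul, mul_pow, ← ofReal_norm ((jap δ y : ℝ) : ℂ), Complex.norm_real,
    Real.norm_of_nonneg h1, ← ENNReal.ofReal_pow h1, jap, ← Real.rpow_natCast, ← Real.rpow_mul h0]
  congr 3
  push_cast
  ring

/-! ### The estimate -/

/-- Restriction estimate: for `d ≥ 2` and `δ > 1/2` there is `C > 0`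
such that for all `k > 0`, `θ0 ∈ S^{d-1}` and `f ∈ L²_δ(ℝ^d)`,
`‖S_{k,θ0} f‖_{L²(S^{d-1})} ≤ C k^{-(d-1)/2} ‖f‖_{L²_δ}`. -/
theorem restriction_estimate
    (d : ℕ) (hd : 2 ≤ d) (δ : ℝ) (hδ : 1 / 2 < δ) :
    ∃ C : ℝ, 0 < C ∧
      ∀ k : ℝ, 0 < k → ∀ θ0 : Ed d, ‖θ0‖ = 1 → ∀ f : Ed d → ℂ,
        wNorm d 2 δ f < ⊤ →
        eLpNorm (fun θ : Metric.sphere (0 : Ed d) 1 => Sop d k θ0 f (θ : Ed d)) 2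
            (sphMeasure d) ≤
          ENNReal.ofReal C * ENNReal.ofReal (k ^ (-(((d : ℝ) - 1) / 2))) *
            wNorm d 2 δ f := by
  obtain ⟨n, rfl⟩ : ∃ n, d = n + 1 := ⟨d - 1, by omega⟩
  have hδ0 : 0 ≤ δ := by linarith
  set M : ℝ≥0∞ := (n + 1) * (ENNReal.ofReal (3 * (n + 1 : ℝ)) *
    ∫⁻ t : ℝ, ENNReal.ofReal ((1 + t ^ 2) ^ (-δ))) with hM
  have hMfin : M ≠ ⊤ := by
    have := (lintegral_weight_lt_top hδ).ne
    rw [hM]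
    finiteness
  -- The factor `(2 * π) ^ n` comes from the frequency normalisation of `𝓕`, and the summand `1`
  -- only secures positivity of the constant.
  set A : ℝ := M.toReal * (2 * Real.pi) ^ n + 1 with hA
  have hA0 : 0 < A := by positivity
  refine ⟨√A, Real.sqrt_pos.2 hA0, fun k hk θ0 _ f _ => ?_⟩
  by_cases hf : Integrable f
  swap
  · -- A non-integrable `f` makes every integral defining `Sop` take the junk value `0`.
    have hzero : (fun θ : Metric.sphere (0 : Ed (n + 1)) 1 =>
        Sop (n + 1) k θ0 f (θ : Ed (n + 1))) = 0 := by
      funext θ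
      exact integral_undef fun h => hf ((integrable_pw_mul_iff _ _ _).1 h)
    rw [hzero, eLpNorm_zero]
    exact zero_le
  set a : ℝ := k / (2 * Real.pi) with ha
  have ha0 : 0 < a := by positivity
  have hsb := sphere_bound ((integrable_pw_mul_iff k θ0 f).2 hf) hδ0 ha0
  simp only [enorm_mul, enorm_pw, one_mul, ← Sop_eq_fourier, ha] at hsb
  rw [← eLpNorm_two_sq, ← wNorm_two_sq, ← ha] at hsb
  set X := eLpNorm (fun θ : Metric.sphere (0 : Ed (n + 1)) 1 =>
    Sop (n + 1) k θ0 f (θ : Ed (n + 1))) 2 (sphMeasure (n + 1))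
  set W := wNorm (n + 1) 2 δ f
  set s : ℝ := k ^ (-((((n + 1 : ℕ) : ℝ) - 1) / 2)) with hs
  have hs0 : 0 ≤ s := by positivity
  have hs2 : s ^ 2 * k ^ n = 1 := by
    rw [hs, ← Real.rpow_natCast, ← Real.rpow_mul hk.le, ← Real.rpow_natCast, ← Real.rpow_add hk]
    push_cast
    ring_nf
    exact Real.rpow_zero k
  have hone : ENNReal.ofReal (s ^ 2 * (2 * Real.pi) ^ n) * ENNReal.ofReal (a ^ n) = 1 := by
    rw [← ENNReal.ofReal_mul (by positivity), ha, div_pow, mul_assoc,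
      mul_div_cancel₀ _ (by positivity), hs2, ENNReal.ofReal_one]
  have hsq : X ^ 2 ≤ (ENNReal.ofReal √A * ENNReal.ofReal s * W) ^ 2 := by
    calc X ^ 2 = ENNReal.ofReal (s ^ 2 * (2 * Real.pi) ^ n) *
          (ENNReal.ofReal (a ^ n) * X ^ 2) := by rw [← mul_assoc, hone, one_mul]
      _ ≤ ENNReal.ofReal (s ^ 2 * (2 * Real.pi) ^ n) * (M * W ^ 2) := by
          refine mul_le_mul_right (hsb.trans (le_of_eq ?_)) _
          rw [hM]
          ring
      _ = ENNReal.ofReal (M.toReal * (2 * Real.pi) ^ n) * ENNReal.ofReal (s ^ 2) * W ^ 2 := by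
          rw [ENNReal.ofReal_mul (by positivity), ENNReal.ofReal_mul ENNReal.toReal_nonneg,
            ENNReal.ofReal_toReal hMfin]
          ring
      _ ≤ ENNReal.ofReal A * ENNReal.ofReal (s ^ 2) * W ^ 2 := by
          gcongr
          rw [hA]
          linarith
      _ = _ := by
          rw [mul_pow, mul_pow, ← ENNReal.ofReal_pow (Real.sqrt_nonneg _), Real.sq_sqrt hA0.le,
            ENNReal.ofReal_pow hs0]
  exact (ENNReal.pow_le_pow_left_iff two_ne_zero).1 hsq

end
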